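/- For every tempered distribution T ∈ S′(ℝ^d) there exist a constant C ∈ ℝ and m ∈ ℕ such that |T(h_β)| ≤ C (2|β|+d)^m for all β ∈ ℕ^d; that is, the sequence of Hermite coefficients of a tempered distribution has polynomial growth. -/

import Mathlib

open MeasureTheory

noncomputable def hermitePoly (n : ℕ) (x : ℝ) : ℝ :=
  (-1 : ℝ) ^ n * Real.exp (x ^ 2 / 2) *
    iteratedDeriv n (fun y : ℝ => Real.exp (-(y ^ 2 / 2))) x

noncomputable def hermiteFun (n : ℕ) (x : ℝ) : ℝ :=
  (Real.sqrt (Real.sqrt (2 * Real.pi) * n.factorial))⁻¹ *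
    Real.exp (-(x ^ 2 / 4)) * hermitePoly n x

noncomputable def hermiteFunMulti (d : ℕ) (α : Fin d → ℕ) (x : EuclideanSpace ℝ (Fin d)) : ℝ :=
  ∏ i, hermiteFun (α i) (x i)

/-!
The coordinate operators `x_i` and `∂_i` map `h_β` to combinations of `h_{β-e_i}` and `h_{β+e_i}`
with coefficients of size `√|β|`, and every Schwartz seminorm is dominated by sums of sup norms of
iterated applications of these operators. Polynomial growth of all seminorms of `h_β` is thereby
reduced to that of `‖h_β‖_∞`, hence to a sup bound for the one-dimensional functions. There, the
derivative of `2 ∑_{k<n} h_k² + h_n²` telescopes to `-x h_n²`, so this energy is largest at the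
origin, where the three-term recurrence gives `h_k(0)² ≤ 1`; hence `h_n² ≤ 2n + 1`.
-/

open scoped SchwartzMap LineDeriv
open Polynomial (aeval hermite derivative)
open Asymptotics

section HermiteFunctions

lemma derivative_hermite_succ (n : ℕ) :
    derivative (hermite (n + 1)) = ((n + 1 : ℕ) : Polynomial ℤ) * hermite n := by
  induction n with
  | zero => simp
  | succ n ih =>
    rw [Polynomial.hermite_succ (n + 1), ih, Polynomial.derivative_sub, Polynomial.derivative_mul,
      Polynomial.derivative_mul, Polynomial.derivative_X, Polynomial.derivative_natCast, ih,
      Polynomial.hermite_succ n]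
    push_cast
    ring

lemma hermitePoly_eq_aeval_hermite (n : ℕ) (x : ℝ) : hermitePoly n x = aeval x (hermite n) := by
  rw [Polynomial.hermite_eq_deriv_gaussian', hermitePoly, iteratedDeriv_eq_iterate]
  ring

/-- The factor `(√(2π) n!)^{-1/2}` normalizing the `n`-th Hermite function in `L²`. -/
noncomputable def hermiteNormConst (n : ℕ) : ℝ := (√(√(2 * Real.pi) * n.factorial))⁻¹

lemma hermiteNormConst_eq_sqrt_mul_succ (n : ℕ) :
    hermiteNormConst n = √(n + 1) * hermiteNormConst (n + 1) := by
  have hfactorial : √(2 * Real.pi) * ((n + 1).factorial : ℝ)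
      = (n + 1) * (√(2 * Real.pi) * n.factorial) := by
    push_cast [Nat.factorial_succ]
    ring
  have hne : √((n : ℝ) + 1) ≠ 0 := by positivity
  rw [hermiteNormConst, hermiteNormConst, hfactorial,
    Real.sqrt_mul (x := (n : ℝ) + 1) (by positivity), mul_inv (√((n : ℝ) + 1)),
    mul_inv_cancel_left₀ hne]

lemma hermiteFun_eq_aeval_hermite (n : ℕ) (x : ℝ) :
    hermiteFun n x = hermiteNormConst n * Real.exp (-(x ^ 2 / 4)) * aeval x (hermite n) := by
  rw [hermiteFun, hermitePoly_eq_aeval_hermite, hermiteNormConst]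

/-- At `n = 0` the junk index `0 - 1 = 0` is harmless, because its coefficient `√0` vanishes. -/
lemma mul_hermiteFun (n : ℕ) (x : ℝ) :
    x * hermiteFun n x = √n * hermiteFun (n - 1) x + √(n + 1) * hermiteFun (n + 1) x := by
  cases n with
  | zero =>
    simp only [hermiteFun_eq_aeval_hermite, hermiteNormConst_eq_sqrt_mul_succ 0, zero_add,
      Polynomial.hermite_zero, Polynomial.hermite_one, Polynomial.aeval_X, map_one,
      Nat.cast_zero, Real.sqrt_zero]
    ring
  | succ n =>
    have hsq : √((n : ℝ) + 1) * √(n + 1) = n + 1 := Real.mul_self_sqrt (by positivity)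
    simp only [Nat.add_sub_cancel, hermiteFun_eq_aeval_hermite, Polynomial.hermite_succ (n + 1),
      derivative_hermite_succ, hermiteNormConst_eq_sqrt_mul_succ n,
      hermiteNormConst_eq_sqrt_mul_succ (n + 1), map_sub, map_mul, Polynomial.aeval_X, map_natCast]
    push_cast
    linear_combination (-√(n + 1 + 1) * hermiteNormConst (n + 1 + 1) * Real.exp (-(x ^ 2 / 4)) *
      aeval x (hermite n)) * hsq

lemma hasDerivAt_hermiteFun_sub_succ (n : ℕ) (x : ℝ) :
    HasDerivAt (hermiteFun n) (x / 2 * hermiteFun n x - √(n + 1) * hermiteFun (n + 1) x) x := by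
  have hexp : HasDerivAt (fun y : ℝ => Real.exp (-(y ^ 2 / 4)))
      (Real.exp (-(x ^ 2 / 4)) * (-(x / 2))) x := by
    refine (((hasDerivAt_pow 2 x).div_const 4).neg.congr_deriv ?_).exp
    simp only [Nat.cast_ofNat, Nat.add_one_sub_one, pow_one]
    ring
  rw [funext (hermiteFun_eq_aeval_hermite n)]
  refine ((hexp.const_mul (hermiteNormConst n)).mul
    (Polynomial.hasDerivAt_aeval (hermite n) x)).congr_deriv ?_
  simp only [hermiteFun_eq_aeval_hermite, Polynomial.hermite_succ,
    hermiteNormConst_eq_sqrt_mul_succ n, map_sub, map_mul, Polynomial.aeval_X]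
  ring

lemma hasDerivAt_hermiteFun (n : ℕ) (x : ℝ) :
    HasDerivAt (hermiteFun n)
      (√n / 2 * hermiteFun (n - 1) x - √(n + 1) / 2 * hermiteFun (n + 1) x) x := by
  refine (hasDerivAt_hermiteFun_sub_succ n x).congr_deriv ?_
  linear_combination (1 / 2) * mul_hermiteFun n x

lemma hasDerivAt_hermiteFun_sq (n : ℕ) (x : ℝ) :
    HasDerivAt (fun y => hermiteFun n y ^ 2)
      (√n * hermiteFun (n - 1) x * hermiteFun n x
        - √(n + 1) * hermiteFun n x * hermiteFun (n + 1) x) x := by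
  refine ((hasDerivAt_hermiteFun n x).pow 2).congr_deriv ?_
  simp only [Nat.cast_ofNat, Nat.add_one_sub_one, pow_one]
  ring

/-- The energy `2 ∑_{k<n} h_k² + h_n²`, which bounds `h_n²` and decreases away from the origin. -/
noncomputable def hermiteEnergy (n : ℕ) (x : ℝ) : ℝ :=
  2 * ∑ k ∈ Finset.range n, hermiteFun k x ^ 2 + hermiteFun n x ^ 2

lemma hermiteFun_sq_le_hermiteEnergy (n : ℕ) (x : ℝ) : hermiteFun n x ^ 2 ≤ hermiteEnergy n x :=
  le_add_of_nonneg_left (by positivity)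

lemma hasDerivAt_sum_range_hermiteFun_sq (n : ℕ) (x : ℝ) :
    HasDerivAt (fun y => ∑ k ∈ Finset.range n, hermiteFun k y ^ 2)
      (-(√n * hermiteFun (n - 1) x * hermiteFun n x)) x := by
  refine (HasDerivAt.fun_sum fun k _ => hasDerivAt_hermiteFun_sq k x).congr_deriv ?_
  have htelescope := Finset.sum_range_sub'
    (fun k : ℕ => √k * hermiteFun (k - 1) x * hermiteFun k x) n
  simpa using htelescope

lemma hasDerivAt_hermiteEnergy (n : ℕ) (x : ℝ) :
    HasDerivAt (hermiteEnergy n) (-x * hermiteFun n x ^ 2) x := by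
  refine (((hasDerivAt_sum_range_hermiteFun_sq n x).const_mul 2).add
    (hasDerivAt_hermiteFun_sq n x)).congr_deriv ?_
  linear_combination hermiteFun n x * mul_hermiteFun n x

lemma le_apply_zero_of_hasDerivAt_neg_mul {f g : ℝ → ℝ} (hf : ∀ x, HasDerivAt f (-x * g x) x)
    (hg : ∀ x, 0 ≤ g x) (x : ℝ) : f x ≤ f 0 := by
  wlog hx : 0 ≤ x generalizing f g x
  · have hreflect (y : ℝ) : HasDerivAt (fun z => f (-z)) (-y * g (-y)) y :=
      ((hf (-y)).comp y (hasDerivAt_neg y)).congr_deriv (by ring)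
    simpa using this hreflect (fun y => hg (-y)) (-x) (by linarith)
  have hanti : AntitoneOn f (Set.Ici 0) := by
    refine antitoneOn_of_hasDerivWithinAt_nonpos (convex_Ici 0)
      (fun y _ => (hf y).continuousAt.continuousWithinAt) (fun y _ => (hf y).hasDerivWithinAt) ?_
    intro y hy
    rw [interior_Ici] at hy
    exact mul_nonpos_of_nonpos_of_nonneg (neg_nonpos.2 hy.le) (hg y)
  exact hanti Set.self_mem_Ici hx hx

lemma hermiteFun_zero_zero_sq_le_one : hermiteFun 0 0 ^ 2 ≤ 1 := by
  have hone : 1 ≤ √(2 * Real.pi) := Real.one_le_sqrt.2 (by linarith [Real.pi_gt_three])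
  have hvalue : hermiteFun 0 0 ^ 2 = (√(2 * Real.pi))⁻¹ := by
    rw [hermiteFun_eq_aeval_hermite, hermiteNormConst]
    simp [-Real.sqrt_mul, -Real.sqrt_mul', inv_pow, Real.sq_sqrt]
  exact hvalue ▸ inv_le_one_of_one_le₀ hone

lemma hermiteFun_add_two_zero_sq_le (n : ℕ) : hermiteFun (n + 2) 0 ^ 2 ≤ hermiteFun n 0 ^ 2 := by
  have hrec : 0 = √(n + 1) * hermiteFun n 0 + √(n + 1 + 1) * hermiteFun (n + 2) 0 := by
    simpa using mul_hermiteFun (n + 1) 0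
  have hsq : ((n : ℝ) + 1 + 1) * hermiteFun (n + 2) 0 ^ 2 = (n + 1) * hermiteFun n 0 ^ 2 := by
    have hneg : √((n : ℝ) + 1 + 1) * hermiteFun (n + 2) 0 = -(√(n + 1) * hermiteFun n 0) := by
      linarith
    have hneg_sq := congrArg (· ^ 2) hneg
    simpa only [neg_sq, mul_pow, Real.sq_sqrt, show 0 ≤ (n : ℝ) + 1 by positivity,
      show 0 ≤ (n : ℝ) + 1 + 1 by positivity] using hneg_sq
  refine le_of_mul_le_mul_left (hsq.trans_le ?_) (by positivity : 0 < (n : ℝ) + 1 + 1)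
  gcongr
  exact le_add_of_nonneg_right zero_le_one

lemma hermiteFun_zero_sq_le_one (n : ℕ) : hermiteFun n 0 ^ 2 ≤ 1 := by
  induction n using Nat.twoStepInduction with
  | zero => exact hermiteFun_zero_zero_sq_le_one
  | one =>
    have hzero : hermiteFun 1 0 = 0 := by simpa using (mul_hermiteFun 0 0).symm
    simp [hzero]
  | more n ih _ => exact (hermiteFun_add_two_zero_sq_le n).trans ih

lemma hermiteEnergy_zero_le (n : ℕ) : hermiteEnergy n 0 ≤ 2 * n + 1 := by
  have hsum := Finset.sum_le_card_nsmul (Finset.range n) _ 1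
    fun k _ => hermiteFun_zero_sq_le_one k
  rw [Finset.card_range, nsmul_one] at hsum
  rw [hermiteEnergy]
  linarith [hermiteFun_zero_sq_le_one n]

lemma hermiteFun_sq_le (n : ℕ) (x : ℝ) : hermiteFun n x ^ 2 ≤ 2 * n + 1 :=
  calc hermiteFun n x ^ 2 ≤ hermiteEnergy n x := hermiteFun_sq_le_hermiteEnergy n x
    _ ≤ hermiteEnergy n 0 := le_apply_zero_of_hasDerivAt_neg_mul (hasDerivAt_hermiteEnergy n)
        (fun y => sq_nonneg (hermiteFun n y)) x
    _ ≤ 2 * n + 1 := hermiteEnergy_zero_le n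

lemma abs_hermiteFun_le (n : ℕ) (x : ℝ) : |hermiteFun n x| ≤ 2 * n + 1 := by
  refine abs_le_of_sq_le_sq ((hermiteFun_sq_le n x).trans ?_) (by positivity)
  exact le_self_pow₀ (by norm_cast; omega) two_ne_zero

end HermiteFunctions

section MultivariateHermiteFunctions

variable {d : ℕ} (β : Fin d → ℕ) (i : Fin d) (x : EuclideanSpace ℝ (Fin d))

lemma hermiteFunMulti_eq_mul_prod_erase {β γ : Fin d → ℕ} {i : Fin d}
    {x y : EuclideanSpace ℝ (Fin d)} (hγ : ∀ j ≠ i, γ j = β j) (hy : ∀ j ≠ i, y j = x j) :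
    hermiteFunMulti d γ y =
      hermiteFun (γ i) (y i) * ∏ j ∈ Finset.univ.erase i, hermiteFun (β j) (x j) := by
  rw [hermiteFunMulti, ← Finset.mul_prod_erase _ _ (Finset.mem_univ i)]
  congr 1
  refine Finset.prod_congr rfl fun j hj => ?_
  rw [hγ j (Finset.ne_of_mem_erase hj), hy j (Finset.ne_of_mem_erase hj)]

lemma hermiteFunMulti_sub_single :
    hermiteFunMulti d (β - Pi.single i 1) x =
      hermiteFun (β i - 1) (x i) * ∏ j ∈ Finset.univ.erase i, hermiteFun (β j) (x j) := by
  have hfactor := hermiteFunMulti_eq_mul_prod_erase (β := β) (γ := β - Pi.single i 1) (i := i)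
    (x := x) (y := x) (fun j hj => by simp [hj]) fun j _ => rfl
  rwa [Pi.sub_apply, Pi.single_eq_same] at hfactor

lemma hermiteFunMulti_add_single :
    hermiteFunMulti d (β + Pi.single i 1) x =
      hermiteFun (β i + 1) (x i) * ∏ j ∈ Finset.univ.erase i, hermiteFun (β j) (x j) := by
  have hfactor := hermiteFunMulti_eq_mul_prod_erase (β := β) (γ := β + Pi.single i 1) (i := i)
    (x := x) (y := x) (fun j hj => by simp [hj]) fun j _ => rfl
  rwa [Pi.add_apply, Pi.single_eq_same] at hfactor

lemma coord_mul_hermiteFunMulti :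
    x i * hermiteFunMulti d β x = √(β i) * hermiteFunMulti d (β - Pi.single i 1) x
      + √(β i + 1) * hermiteFunMulti d (β + Pi.single i 1) x := by
  rw [hermiteFunMulti_sub_single, hermiteFunMulti_add_single,
    hermiteFunMulti_eq_mul_prod_erase (fun j (_ : j ≠ i) => rfl) fun j _ => rfl]
  linear_combination (∏ j ∈ Finset.univ.erase i, hermiteFun (β j) (x j)) *
    mul_hermiteFun (β i) (x i)

lemma hasLineDerivAt_hermiteFunMulti :
    HasLineDerivAt ℝ (hermiteFunMulti d β)
      (√(β i) / 2 * hermiteFunMulti d (β - Pi.single i 1) x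
        - √(β i + 1) / 2 * hermiteFunMulti d (β + Pi.single i 1) x)
      x (EuclideanSpace.single i 1) := by
  have hline (t : ℝ) : hermiteFunMulti d β (x + t • EuclideanSpace.single i 1) =
      hermiteFun (β i) (x i + t) * ∏ j ∈ Finset.univ.erase i, hermiteFun (β j) (x j) := by
    have hfactor := hermiteFunMulti_eq_mul_prod_erase (β := β) (γ := β) (i := i) (x := x)
      (y := x + t • EuclideanSpace.single i 1) (fun j _ => rfl) fun j hj => by simp [hj]
    have hcoord : (x + t • EuclideanSpace.single i (1 : ℝ)) i = x i + t := by simp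
    rwa [hcoord] at hfactor
  have hcoord : HasDerivAt (fun t => hermiteFun (β i) (x i + t))
      (√(β i) / 2 * hermiteFun (β i - 1) (x i) - √(β i + 1) / 2 * hermiteFun (β i + 1) (x i))
      0 := by
    apply HasDerivAt.comp_const_add
    simpa using hasDerivAt_hermiteFun (β i) (x i)
  rw [HasLineDerivAt, funext hline, hermiteFunMulti_sub_single, hermiteFunMulti_add_single]
  exact (hcoord.mul_const _).congr_deriv (by ring)

lemma abs_hermiteFunMulti_le_prod :
    |hermiteFunMulti d β x| ≤ ∏ i, (2 * (β i : ℝ) + 1) := by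
  rw [hermiteFunMulti, Finset.abs_prod]
  exact Finset.prod_le_prod (fun i _ => abs_nonneg _) fun i _ => abs_hermiteFun_le (β i) (x i)

end MultivariateHermiteFunctions

section PolynomialGrowth

variable {ι κ : Type*} [Fintype ι] [Fintype κ] {a b : (ι → ℕ) → ℝ}

/-- Polynomial growth of a multi-indexed real sequence: `a β = O((|β| + 1)^m)` for some `m`. Along
the filter `⊤` the bound is uniform over all `β`, and the shift by one keeps the weight positive at
`β = 0`. -/
def HasPolyGrowth (a : (ι → ℕ) → ℝ) : Prop :=
  ∃ m : ℕ, a =O[⊤] fun β => ((∑ i, β i + 1 : ℕ) : ℝ) ^ m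

namespace HasPolyGrowth

lemma mono (hb : HasPolyGrowth b) (hab : ∀ β, |a β| ≤ b β) : HasPolyGrowth a := by
  obtain ⟨m, hm⟩ := hb
  exact ⟨m, (isBigO_of_le _ fun β => (hab β).trans (le_abs_self _)).trans hm⟩

lemma abs (ha : HasPolyGrowth a) : HasPolyGrowth fun β => |a β| :=
  ha.imp fun _ hm => hm.abs_left

lemma const (c : ℝ) : HasPolyGrowth fun _ : ι → ℕ => c :=
  ⟨0, by simpa only [pow_zero] using isBigO_const_const c one_ne_zero ⊤⟩

lemma degree : HasPolyGrowth fun β : ι → ℕ => ((∑ i, β i : ℕ) : ℝ) := by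
  refine ⟨1, isBigO_of_le _ fun β => ?_⟩
  simp only [pow_one, Real.norm_natCast, Nat.cast_le]
  omega

lemma coord (i : ι) : HasPolyGrowth fun β : ι → ℕ => (β i : ℝ) :=
  degree.mono fun β => by
    rw [Nat.abs_cast, Nat.cast_le]
    exact Finset.single_le_sum (fun _ _ => Nat.zero_le _) (Finset.mem_univ i)

lemma add (ha : HasPolyGrowth a) (hb : HasPolyGrowth b) : HasPolyGrowth fun β => a β + b β := by
  obtain ⟨m, hm⟩ := ha
  obtain ⟨n, hn⟩ := hb
  have hpow {k : ℕ} (hk : k ≤ max m n) :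
      (fun β : ι → ℕ => ((∑ i, β i + 1 : ℕ) : ℝ) ^ k) =O[⊤]
        fun β => ((∑ i, β i + 1 : ℕ) : ℝ) ^ max m n :=
    isBigO_of_le _ fun β => by
      rw [norm_pow, norm_pow, Real.norm_natCast]
      exact pow_le_pow_right₀ (by norm_cast; omega) hk
  exact ⟨max m n, (hm.trans (hpow (le_max_left m n))).add (hn.trans (hpow (le_max_right m n)))⟩

lemma mul (ha : HasPolyGrowth a) (hb : HasPolyGrowth b) : HasPolyGrowth fun β => a β * b β := by
  obtain ⟨m, hm⟩ := ha
  obtain ⟨n, hn⟩ := hb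
  exact ⟨m + n, by simpa only [pow_add] using hm.mul hn⟩

lemma sum {α : Type*} {s : Finset α} {a : α → (ι → ℕ) → ℝ} (ha : ∀ j ∈ s, HasPolyGrowth (a j)) :
    HasPolyGrowth fun β => ∑ j ∈ s, a j β := by
  classical
  induction s using Finset.induction_on with
  | empty => simpa using const 0
  | insert j s hj ih =>
    simp only [Finset.sum_insert hj]
    exact (ha j (Finset.mem_insert_self j s)).add
      (ih fun k hk => ha k (Finset.mem_insert_of_mem hk))

lemma prod {α : Type*} {s : Finset α} {a : α → (ι → ℕ) → ℝ} (ha : ∀ j ∈ s, HasPolyGrowth (a j)) :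
    HasPolyGrowth fun β => ∏ j ∈ s, a j β := by
  classical
  induction s using Finset.induction_on with
  | empty => simpa using const 1
  | insert j s hj ih =>
    simp only [Finset.prod_insert hj]
    exact (ha j (Finset.mem_insert_self j s)).mul
      (ih fun k hk => ha k (Finset.mem_insert_of_mem hk))

lemma sqrt (ha : HasPolyGrowth a) : HasPolyGrowth fun β => √(a β) := by
  refine (ha.abs.add (const 1)).mono fun β => ?_
  rw [abs_of_nonneg (Real.sqrt_nonneg _), Real.sqrt_le_left (by positivity)]
  nlinarith [le_abs_self (a β), abs_nonneg (a β)]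

lemma comp {σ : (κ → ℕ) → ι → ℕ} (ha : HasPolyGrowth a)
    (hσ : HasPolyGrowth fun β => ((∑ i, σ β i : ℕ) : ℝ)) : HasPolyGrowth fun β => a (σ β) := by
  obtain ⟨m, hm⟩ := ha
  obtain ⟨n, hn⟩ := hσ.add (const 1)
  refine ⟨n * m, (hm.comp_tendsto Filter.tendsto_top).trans ?_⟩
  simpa only [pow_mul, Function.comp_def, Nat.cast_add, Nat.cast_one] using hn.pow m

variable [DecidableEq ι]

lemma comp_sub_single (ha : HasPolyGrowth a) (i : ι) :
    HasPolyGrowth fun β => a (β - Pi.single i 1) :=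
  ha.comp <| degree.mono fun β => by
    rw [Nat.abs_cast, Nat.cast_le]
    exact Finset.sum_le_sum fun j _ => Nat.sub_le _ _

lemma comp_add_single (ha : HasPolyGrowth a) (i : ι) :
    HasPolyGrowth fun β => a (β + Pi.single i 1) :=
  ha.comp <| by simpa [Finset.sum_add_distrib] using degree.add (const 1)

lemma seminorm_smul_add_smul {V : Type*} [AddCommGroup V] [Module ℝ V] {q : Seminorm ℝ V}
    {h : (ι → ℕ) → V} (hq : HasPolyGrowth fun β => q (h β)) (i : ι) {u v : (ι → ℕ) → ℝ}
    (hu : HasPolyGrowth u) (hv : HasPolyGrowth v) :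
    HasPolyGrowth fun β =>
      q (u β • h (β - Pi.single i 1) + v β • h (β + Pi.single i 1)) := by
  refine ((hu.abs.mul (hq.comp_sub_single i)).add (hv.abs.mul (hq.comp_add_single i))).mono
    fun β => ?_
  rw [abs_of_nonneg (apply_nonneg q _)]
  refine (map_add_le_add q _ _).trans_eq ?_
  rw [map_smul_eq_mul, map_smul_eq_mul, Real.norm_eq_abs, Real.norm_eq_abs]

lemma exists_le_mul_two_mul_sum_add_pow {d : ℕ} {a : (Fin d → ℕ) → ℝ} (ha : HasPolyGrowth a) :
    ∃ C : ℝ, ∃ m : ℕ, ∀ β, a β ≤ C * ((2 * ∑ i, β i + d : ℕ) : ℝ) ^ m := by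
  rcases Nat.eq_zero_or_pos d with rfl | hd
  · exact ⟨a 0, 0, fun β => by simp [Subsingleton.elim β 0]⟩
  obtain ⟨m, hm⟩ := ha
  obtain ⟨C, hC, hbound⟩ := hm.exists_nonneg
  refine ⟨C, m, fun β => ?_⟩
  calc a β ≤ ‖a β‖ := Real.le_norm_self _
    _ ≤ C * ‖((∑ i, β i + 1 : ℕ) : ℝ) ^ m‖ := isBigOWith_top.1 hbound β
    _ ≤ C * ((2 * ∑ i, β i + d : ℕ) : ℝ) ^ m := by
      rw [norm_pow, Real.norm_natCast]
      gcongr <;> omega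

end HasPolyGrowth

end PolynomialGrowth

section SchwartzSeminorms

variable {ι E F : Type*} [Fintype ι] [NormedAddCommGroup E] [InnerProductSpace ℝ E]
  [NormedAddCommGroup F] [NormedSpace ℝ F]

lemma norm_le_sum_abs_inner (b : OrthonormalBasis ι ℝ E) (x : E) : ‖x‖ ≤ ∑ i, |inner ℝ (b i) x| :=
  calc ‖x‖ = ‖∑ i, inner ℝ (b i) x • b i‖ := by rw [b.sum_repr']
    _ ≤ ∑ i, |inner ℝ (b i) x| := norm_sum_le_of_le _ fun i _ => by simp [norm_smul]

lemma seminorm_succ_zero_le_sum_inner_smul (b : OrthonormalBasis ι ℝ E) (k : ℕ) (f : 𝓢(E, F)) :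
    SchwartzMap.seminorm ℝ (k + 1) 0 f ≤
      ∑ i, SchwartzMap.seminorm ℝ k 0 (SchwartzMap.smulLeftCLM F (inner ℝ (b i)) f) := by
  refine SchwartzMap.seminorm_le_bound ℝ (k + 1) 0 f
    (Finset.sum_nonneg fun i _ => apply_nonneg _ _) fun x => ?_
  calc ‖x‖ ^ (k + 1) * ‖iteratedFDeriv ℝ 0 f x‖
      = ‖x‖ * (‖x‖ ^ k * ‖f x‖) := by rw [norm_iteratedFDeriv_zero]; ring
    _ ≤ (∑ i, |inner ℝ (b i) x|) * (‖x‖ ^ k * ‖f x‖) := by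
        gcongr
        exact norm_le_sum_abs_inner b x
    _ = ∑ i, ‖x‖ ^ k * ‖SchwartzMap.smulLeftCLM F (inner ℝ (b i)) f x‖ := by
        rw [Finset.sum_mul]
        refine Finset.sum_congr rfl fun i _ => ?_
        rw [SchwartzMap.smulLeftCLM_apply_apply (by fun_prop), norm_smul, Real.norm_eq_abs]
        ring
    _ ≤ _ := Finset.sum_le_sum fun i _ => SchwartzMap.norm_pow_mul_le_seminorm ℝ _ k x

lemma fderiv_eq_sum_smulRightL_lineDeriv (b : OrthonormalBasis ι ℝ E) (f : 𝓢(E, F)) :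
    fderiv ℝ f = fun x =>
      ∑ i, ContinuousLinearMap.smulRightL ℝ E F (innerSL ℝ (b i)) ((∂_{b i} f : 𝓢(E, F)) x) := by
  ext x v
  simp only [SchwartzMap.lineDerivOp_apply_eq_fderiv]
  conv_lhs => rw [← b.sum_repr' v]
  simp

lemma norm_iteratedFDeriv_succ_le_sum_lineDeriv (b : OrthonormalBasis ι ℝ E) (n : ℕ)
    (f : 𝓢(E, F)) (x : E) :
    ‖iteratedFDeriv ℝ (n + 1) f x‖ ≤ ∑ i, ‖iteratedFDeriv ℝ n (∂_{b i} f : 𝓢(E, F)) x‖ := by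
  set L : ι → F →L[ℝ] E →L[ℝ] F :=
    fun i => ContinuousLinearMap.smulRightL ℝ E F (innerSL ℝ (b i))
  have hL (i : ι) : ‖L i‖ ≤ 1 := by
    refine (L i).opNorm_le_bound zero_le_one fun v => ?_
    simp [L, ContinuousLinearMap.norm_smulRight_apply]
  have hsmooth (i : ι) : ContDiff ℝ n (∂_{b i} f : 𝓢(E, F)) := (∂_{b i} f : 𝓢(E, F)).smooth n
  have hterm : ∀ i ∈ Finset.univ,
      ContDiffAt ℝ n (fun y => L i ((∂_{b i} f : 𝓢(E, F)) y)) x :=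
    fun i _ => ((L i).contDiff.comp (hsmooth i)).contDiffAt
  rw [← norm_iteratedFDeriv_fderiv, fderiv_eq_sum_smulRightL_lineDeriv b f,
    iteratedFDeriv_fun_sum_apply hterm]
  refine norm_sum_le_of_le _ fun i _ => ?_
  exact ((L i).norm_iteratedFDeriv_comp_left (hsmooth i).contDiffAt le_rfl).trans
    (mul_le_of_le_one_left (norm_nonneg _) (hL i))

lemma seminorm_succ_le_sum_lineDeriv (b : OrthonormalBasis ι ℝ E) (k n : ℕ) (f : 𝓢(E, F)) :
    SchwartzMap.seminorm ℝ k (n + 1) f ≤ ∑ i, SchwartzMap.seminorm ℝ k n (∂_{b i} f : 𝓢(E, F)) := by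
  refine SchwartzMap.seminorm_le_bound ℝ k (n + 1) f
    (Finset.sum_nonneg fun i _ => apply_nonneg _ _) fun x => ?_
  calc ‖x‖ ^ k * ‖iteratedFDeriv ℝ (n + 1) f x‖
      ≤ ‖x‖ ^ k * ∑ i, ‖iteratedFDeriv ℝ n (∂_{b i} f : 𝓢(E, F)) x‖ := by
        gcongr
        exact norm_iteratedFDeriv_succ_le_sum_lineDeriv b n f x
    _ = ∑ i, ‖x‖ ^ k * ‖iteratedFDeriv ℝ n (∂_{b i} f : 𝓢(E, F)) x‖ := Finset.mul_sum _ _ _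
    _ ≤ _ := Finset.sum_le_sum fun i _ => SchwartzMap.le_seminorm ℝ k n _ x

end SchwartzSeminorms

section HermiteSeminorms

variable {d : ℕ} {h : (Fin d → ℕ) → 𝓢(EuclideanSpace ℝ (Fin d), ℝ)}

lemma inner_basisFun_smul_hermite (hh : ∀ β x, h β x = hermiteFunMulti d β x) (β : Fin d → ℕ)
    (i : Fin d) :
    SchwartzMap.smulLeftCLM ℝ (inner ℝ (EuclideanSpace.basisFun (Fin d) ℝ i)) (h β) =
      √(β i) • h (β - Pi.single i 1) + √(β i + 1) • h (β + Pi.single i 1) := by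
  ext x
  rw [SchwartzMap.smulLeftCLM_apply_apply (by fun_prop), EuclideanSpace.basisFun_inner]
  simpa [hh] using coord_mul_hermiteFunMulti β i x

lemma lineDeriv_basisFun_hermite (hh : ∀ β x, h β x = hermiteFunMulti d β x) (β : Fin d → ℕ)
    (i : Fin d) :
    ∂_{EuclideanSpace.basisFun (Fin d) ℝ i} (h β) =
      (2⁻¹ * √(β i)) • h (β - Pi.single i 1) + (-2⁻¹ * √(β i + 1)) • h (β + Pi.single i 1) := by
  ext x
  rw [SchwartzMap.lineDerivOp_apply, funext (hh β), EuclideanSpace.basisFun_apply,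
    (hasLineDerivAt_hermiteFunMulti β i x).lineDeriv]
  simp only [add_apply, smul_apply, hh, smul_eq_mul]
  ring

lemma hasPolyGrowth_seminorm_zero_zero_hermite (hh : ∀ β x, h β x = hermiteFunMulti d β x) :
    HasPolyGrowth fun β => SchwartzMap.seminorm ℝ 0 0 (h β) := by
  have hprod : HasPolyGrowth fun β : Fin d → ℕ => ∏ i, (2 * (β i : ℝ) + 1) :=
    .prod fun i _ => ((HasPolyGrowth.const 2).mul (.coord i)).add (.const 1)
  refine hprod.mono fun β => ?_
  rw [abs_of_nonneg (apply_nonneg _ _)]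
  refine SchwartzMap.seminorm_le_bound ℝ 0 0 (h β) (by positivity) fun x => ?_
  simpa [hh] using abs_hermiteFunMulti_le_prod β x

lemma hasPolyGrowth_seminorm_hermite (hh : ∀ β x, h β x = hermiteFunMulti d β x) (k n : ℕ) :
    HasPolyGrowth fun β => SchwartzMap.seminorm ℝ k n (h β) := by
  have hsqrt (i : Fin d) : HasPolyGrowth fun β : Fin d → ℕ => √(β i) := (HasPolyGrowth.coord i).sqrt
  have hsqrt_succ (i : Fin d) : HasPolyGrowth fun β : Fin d → ℕ => √(β i + 1) :=
    ((HasPolyGrowth.coord i).add (.const 1)).sqrt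
  induction n with
  | zero =>
    induction k with
    | zero => exact hasPolyGrowth_seminorm_zero_zero_hermite hh
    | succ k ih =>
      refine (HasPolyGrowth.sum fun i (_ : i ∈ Finset.univ) =>
        ih.seminorm_smul_add_smul i (hsqrt i) (hsqrt_succ i)).mono fun β => ?_
      rw [abs_of_nonneg (apply_nonneg _ _)]
      simp only [← inner_basisFun_smul_hermite hh]
      exact seminorm_succ_zero_le_sum_inner_smul _ k (h β)
  | succ n ih =>
    refine (HasPolyGrowth.sum fun i (_ : i ∈ Finset.univ) =>
      ih.seminorm_smul_add_smul i ((HasPolyGrowth.const 2⁻¹).mul (hsqrt i))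
        ((HasPolyGrowth.const (-2⁻¹)).mul (hsqrt_succ i))).mono fun β => ?_
    rw [abs_of_nonneg (apply_nonneg _ _)]
    simp only [← lineDeriv_basisFun_hermite hh]
    exact seminorm_succ_le_sum_lineDeriv _ k n (h β)

lemma hasPolyGrowth_continuous_seminorm_hermite (hh : ∀ β x, h β x = hermiteFunMulti d β x)
    {q : Seminorm ℝ 𝓢(EuclideanSpace ℝ (Fin d), ℝ)} (hq : Continuous q) :
    HasPolyGrowth fun β => q (h β) := by
  obtain ⟨s, C, -, hbound⟩ := Seminorm.bound_of_continuous
    (schwartz_withSeminorms ℝ (EuclideanSpace ℝ (Fin d)) ℝ) q hq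
  have hsum : HasPolyGrowth fun β => ∑ p ∈ s, SchwartzMap.seminorm ℝ p.1 p.2 (h β) :=
    .sum fun p _ => hasPolyGrowth_seminorm_hermite hh p.1 p.2
  refine ((HasPolyGrowth.const (C : ℝ)).mul hsum).mono fun β => ?_
  rw [abs_of_nonneg (apply_nonneg q _)]
  have hsup : s.sup (schwartzSeminormFamily ℝ (EuclideanSpace ℝ (Fin d)) ℝ) (h β) ≤
      ∑ p ∈ s, SchwartzMap.seminorm ℝ p.1 p.2 (h β) := by
    simpa [schwartzSeminormFamily] using Seminorm.finset_sup_le_sum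
      (schwartzSeminormFamily ℝ (EuclideanSpace ℝ (Fin d)) ℝ) s (h β)
  exact (hbound (h β)).trans (mul_le_mul_of_nonneg_left hsup C.coe_nonneg)

end HermiteSeminorms

theorem tempered_distribution_hermite_coeff_poly_growth_general (d : ℕ)
    (h : (Fin d → ℕ) → SchwartzMap (EuclideanSpace ℝ (Fin d)) ℝ)
    (hh : ∀ β x, h β x = hermiteFunMulti d β x)
    (q : Seminorm ℝ (SchwartzMap (EuclideanSpace ℝ (Fin d)) ℝ)) (hq : Continuous q) :
    ∃ C : ℝ, ∃ m : ℕ, ∀ β : Fin d → ℕ,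
      q (h β) ≤ C * (((2 * ∑ i, β i) + d : ℕ) : ℝ) ^ m :=
  (hasPolyGrowth_continuous_seminorm_hermite hh hq).exists_le_mul_two_mul_sum_add_pow

/-- The Hermite coefficients of a tempered distribution have polynomial growth:
there exist `C` and `m` with `|T(h_β)| ≤ C (2|β|+d)^m` for all `β`. -/
theorem tempered_distribution_hermite_coeff_poly_growth (d : ℕ)
    (h : (Fin d → ℕ) → SchwartzMap (EuclideanSpace ℝ (Fin d)) ℝ)
    (hh : ∀ β x, h β x = hermiteFunMulti d β x)
    (T : SchwartzMap (EuclideanSpace ℝ (Fin d)) ℝ →L[ℝ] ℝ) :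
    ∃ C : ℝ, ∃ m : ℕ, ∀ β : Fin d → ℕ,
      |T (h β)| ≤ C * (((2 * ∑ i, β i) + d : ℕ) : ℝ) ^ m := by
  exact tempered_distribution_hermite_coeff_poly_growth_general d h hh
    ((normSeminorm ℝ ℝ).comp T.toLinearMap) (continuous_norm.comp T.continuous)
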